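/- (Oscillating ratio of Beukers–Forsgård evaluations.) Let z₀ := (√3 + 2)/(3√3) and z₁ := (√3 − 2)/(3√3). For every real a such that 4/3 − a is not zero or a negative integer, one has ₂F₁(a, 1 − 2a; 4/3 − a; z₀) = 4^a · (cos(π/12))^{2a−1} · cos((π/2)·(a + 1/6)) · ₂F₁(a, 1 − 2a; 4/3 − a; z₁). (Both arguments z₀ ≈ 0.718 and z₁ ≈ −0.0516 lie in (−1,1), so both hypergeometric series converge absolutely.) -/

import Mathlib

open Real

/-- Gauss hypergeometric function ₂F₁ defined via its power series
    (the tsum; converges absolutely for |z| < 1). -/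
noncomputable def hyp2F1 (a b c z : ℝ) : ℝ :=
  ∑' n : ℕ, ((ascPochhammer ℝ n).eval a * (ascPochhammer ℝ n).eval b /
      (ascPochhammer ℝ n).eval c) * z ^ n / (Nat.factorial n)

noncomputable def z₀ : ℝ := (Real.sqrt 3 + 2) / (3 * Real.sqrt 3)

noncomputable def z₁ : ℝ := (Real.sqrt 3 - 2) / (3 * Real.sqrt 3)

/-!
Let `F` be a solution of the hypergeometric equation with parameters `a, 1 - 2 * a; 4 / 3 - a`. The
cubic pull-back `F (1 / (1 + p ^ 3))` and the quartic pull-back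
`(1 + p) ^ (1 - 2 * a) * F ((1 + p) ^ 4 / (9 * (1 + p ^ 3)))` solve the same second-order equation,
which is invariant under `p ↦ q * p` for `q ^ 3 = 1`. On the ray `p = u > 0` this gives three
solutions: the cubic pull-back, and the quartic pull-back at `q * u` and at `q ^ 2 * u` for a
primitive `q`. All three arguments of `F` equal `1 / 9` at `u = 2`, so the linear relation between
the solutions can be found there without knowing `F`. At `u = √3 - 1` the relation becomes the
theorem: the cubic argument is `z₀`, both quartic arguments are `z₁`, and the conjugate phases of
the two quartic terms add up to the cosine.
-/

section PowerSeries

open FormalMultilinearSeries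

variable {𝕜 : Type*} [NontriviallyNormedField 𝕜] {f : 𝕜 → 𝕜} {g : ℕ → 𝕜} {r : ENNReal}

lemma hasSum_mul_pow_of_hasFPowerSeriesOnBall (h : HasFPowerSeriesOnBall f (ofScalars 𝕜 g) 0 r)
    {x : 𝕜} (hx : x ∈ Metric.eball 0 r) : HasSum (fun n ↦ g n * x ^ n) (f x) := by
  simpa [ofScalars_apply_eq, mul_comm] using h.hasSum hx

lemma hasSum_natCast_mul_mul_pow {x S : 𝕜}
    (h : HasSum (fun n : ℕ ↦ (n + 1) * g (n + 1) * x ^ n) S) :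
    HasSum (fun n : ℕ ↦ n * g n * x ^ n) (x * S) := by
  rw [← hasSum_nat_add_iff' 1]
  simpa [pow_succ, mul_assoc, mul_comm, mul_left_comm] using h.mul_left x

variable [CompleteSpace 𝕜]

lemma hasFPowerSeriesOnBall_deriv {x : 𝕜} (h : HasFPowerSeriesOnBall f (ofScalars 𝕜 g) x r) :
    HasFPowerSeriesOnBall (deriv f) (ofScalars 𝕜 fun n ↦ (n + 1) * g (n + 1)) x r := by
  have hseries : (ContinuousLinearMap.apply 𝕜 𝕜 (1 : 𝕜)).compFormalMultilinearSeries
      (ofScalars 𝕜 g).derivSeries = ofScalars 𝕜 fun n ↦ (n + 1) * g (n + 1) := by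
    refine FormalMultilinearSeries.ext fun n ↦ ContinuousMultilinearMap.ext_ring ?_
    change (ofScalars 𝕜 g).derivSeries.coeff n 1 = (ofScalars 𝕜 _).coeff n
    rw [derivSeries_coeff_one, coeff_ofScalars, coeff_ofScalars, nsmul_eq_mul, Nat.cast_succ]
  exact hseries ▸ (ContinuousLinearMap.apply 𝕜 𝕜 (1 : 𝕜)).comp_hasFPowerSeriesOnBall h.fderiv

lemma hypergeometric_ode_of_coeff_rec {a b c : 𝕜}
    (h : HasFPowerSeriesOnBall f (ofScalars 𝕜 g) 0 r)
    (hg : ∀ n : ℕ, (n + 1) * (n + c) * g (n + 1) = (n + a) * (n + b) * g n)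
    {x : 𝕜} (hx : x ∈ Metric.eball 0 r) :
    x * (1 - x) * deriv (deriv f) x = a * b * f x - (c - (a + b + 1) * x) * deriv f x := by
  have h' := hasFPowerSeriesOnBall_deriv h
  have sum_f := hasSum_mul_pow_of_hasFPowerSeriesOnBall h hx
  have sum_f' := hasSum_mul_pow_of_hasFPowerSeriesOnBall h' hx
  have sum_f'' := hasSum_mul_pow_of_hasFPowerSeriesOnBall (hasFPowerSeriesOnBall_deriv h') hx
  have sum_xf' := hasSum_natCast_mul_mul_pow sum_f'
  have sum_xf'' := hasSum_natCast_mul_mul_pow (g := fun n ↦ (n + 1) * g (n + 1)) sum_f''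
  have sum_xxf'' : HasSum (fun n : ℕ ↦ n * ((n - 1) * g n) * x ^ n)
      (x * (x * deriv (deriv f) x)) := by
    refine hasSum_natCast_mul_mul_pow (g := fun n ↦ (n - 1) * g n) (sum_xf''.congr_fun fun n ↦ ?_)
    push_cast; ring
  have sum_ode := (((sum_xf''.sub sum_xxf'').add (sum_f'.mul_left c)).sub
    (sum_xf'.mul_left (a + b + 1))).sub (sum_f.mul_left (a * b))
  have hzero := sum_ode.unique (hasSum_zero.congr_fun fun n ↦ ?_)
  · linear_combination hzero
  · linear_combination x ^ n * hg n

end PowerSeries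

section Hypergeometric

variable {𝕂 : Type*} [RCLike 𝕂] {a b c : 𝕂}

lemma ordinaryHypergeometricCoefficient_succ (hc : ∀ n : ℕ, c ≠ -n) (n : ℕ) :
    (n + 1) * (n + c) * ordinaryHypergeometricCoefficient a b c (n + 1) =
      (n + a) * (n + b) * ordinaryHypergeometricCoefficient a b c n := by
  have hcn : c + n ≠ 0 := fun h ↦ hc n (eq_neg_of_add_eq_zero_left h)
  have hn : (n + 1 : 𝕂) ≠ 0 := n.cast_add_one_ne_zero
  simp only [ordinaryHypergeometricCoefficient, ascPochhammer_succ_eval, Nat.factorial_succ,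
    Nat.cast_mul, Nat.cast_succ, mul_inv]
  field_simp
  ring

variable (a b c) in
lemma one_le_radius_ordinaryHypergeometricSeries :
    1 ≤ (ordinaryHypergeometricSeries 𝕂 a b c).radius := by
  by_cases habc : ∀ k : ℕ, (k : 𝕂) ≠ -a ∧ (k : 𝕂) ≠ -b ∧ (k : 𝕂) ≠ -c
  · exact (ordinaryHypergeometricSeries_radius_eq_one 𝕂 a b c habc).ge
  · push Not at habc
    obtain ⟨k, hk⟩ := habc
    have hzero : ∀ n, ordinaryHypergeometricSeries 𝕂 a b c (n + (k + 1)) = 0 := fun n ↦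
      ordinaryHypergeometricSeries_eq_zero_of_neg_nat a b c (k := k) (by tauto) (by lia)
    exact le_top.trans
      (FormalMultilinearSeries.radius_eq_top_of_forall_image_add_eq_zero _ _ hzero).ge

variable (a b c) in
lemma hasFPowerSeriesOnBall_ordinaryHypergeometric :
    HasFPowerSeriesOnBall (₂F₁ a b c : 𝕂 → 𝕂) (ordinaryHypergeometricSeries 𝕂 a b c) 0 1 :=
  have hradius := one_le_radius_ordinaryHypergeometricSeries a b c
  ((ordinaryHypergeometricSeries 𝕂 a b c).hasFPowerSeriesOnBall
    (zero_lt_one.trans_le hradius)).mono zero_lt_one hradius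

lemma ordinaryHypergeometric_ode (hc : ∀ n : ℕ, c ≠ -n) {x : 𝕂} (hx : x ∈ Metric.ball 0 1) :
    x * (1 - x) * deriv (deriv (₂F₁ a b c)) x =
      a * b * ₂F₁ a b c x - (c - (a + b + 1) * x) * deriv (₂F₁ a b c) x :=
  hypergeometric_ode_of_coeff_rec (hasFPowerSeriesOnBall_ordinaryHypergeometric a b c)
    (ordinaryHypergeometricCoefficient_succ hc) (by rwa [← ENNReal.ofReal_one, Metric.eball_ofReal])

variable (a b c) in
lemma analyticOnNhd_ordinaryHypergeometric :
    AnalyticOnNhd 𝕂 (₂F₁ a b c) (Metric.ball (0 : 𝕂) 1) := by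
  rw [← Metric.eball_ofReal, ENNReal.ofReal_one]
  exact (hasFPowerSeriesOnBall_ordinaryHypergeometric a b c).analyticOnNhd

end Hypergeometric

section LinearODE

open Set

/-- `f` solves the scalar second-order linear differential equation `f'' = P f' + Q f` on `s`,
with derivative `f'`. Carrying `f'` as data avoids `deriv` and makes initial values explicit. -/
structure SolvesLinearODEOn {𝕜 𝕜' : Type*} [NontriviallyNormedField 𝕜] [NormedField 𝕜']
    [NormedAlgebra 𝕜 𝕜'] (P Q f f' : 𝕜 → 𝕜') (s : Set 𝕜) : Prop where
  hasDerivAt : ∀ x ∈ s, HasDerivAt f (f' x) x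
  hasDerivAt_deriv : ∀ x ∈ s, HasDerivAt f' (P x * f' x + Q x * f x) x

namespace SolvesLinearODEOn

section Basic

variable {𝕜 𝕜' : Type*} [NontriviallyNormedField 𝕜] [NormedField 𝕜'] [NormedAlgebra 𝕜 𝕜']
  {P Q f f' g g' : 𝕜 → 𝕜'} {s t : Set 𝕜}

lemma mono (h : SolvesLinearODEOn P Q f f' t) (hst : s ⊆ t) : SolvesLinearODEOn P Q f f' s :=
  ⟨fun x hx ↦ h.hasDerivAt x (hst hx), fun x hx ↦ h.hasDerivAt_deriv x (hst hx)⟩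

lemma add (hf : SolvesLinearODEOn P Q f f' s) (hg : SolvesLinearODEOn P Q g g' s) :
    SolvesLinearODEOn P Q (fun x ↦ f x + g x) (fun x ↦ f' x + g' x) s where
  hasDerivAt x hx := (hf.hasDerivAt x hx).add (hg.hasDerivAt x hx)
  hasDerivAt_deriv x hx :=
    ((hf.hasDerivAt_deriv x hx).add (hg.hasDerivAt_deriv x hx)).congr_deriv (by ring)

lemma const_mul (k : 𝕜') (hf : SolvesLinearODEOn P Q f f' s) :
    SolvesLinearODEOn P Q (fun x ↦ k * f x) (fun x ↦ k * f' x) s where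
  hasDerivAt x hx := (hf.hasDerivAt x hx).const_mul k
  hasDerivAt_deriv x hx := ((hf.hasDerivAt_deriv x hx).const_mul k).congr_deriv (by ring)

end Basic

lemma pullback {𝕜 : Type*} [NontriviallyNormedField 𝕜]
    {P Q P₁ Q₁ f f' m μ μ' φ φ' φ'' : 𝕜 → 𝕜} {s t : Set 𝕜}
    (hf : SolvesLinearODEOn P Q f f' t) (hmaps : MapsTo φ s t)
    (hφ : ∀ x ∈ s, HasDerivAt φ (φ' x) x) (hφ' : ∀ x ∈ s, HasDerivAt φ' (φ'' x) x)
    (hm : ∀ x ∈ s, HasDerivAt m (m x * μ x) x) (hμ : ∀ x ∈ s, HasDerivAt μ (μ' x) x)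
    (hP : ∀ x ∈ s, φ'' x + 2 * μ x * φ' x + φ' x ^ 2 * P (φ x) = P₁ x * φ' x)
    (hQ : ∀ x ∈ s, μ' x + μ x ^ 2 + φ' x ^ 2 * Q (φ x) = P₁ x * μ x + Q₁ x) :
    SolvesLinearODEOn P₁ Q₁ (fun x ↦ m x * f (φ x))
      (fun x ↦ m x * (μ x * f (φ x) + φ' x * f' (φ x))) s where
  hasDerivAt x hx :=
    ((hm x hx).mul ((hf.hasDerivAt _ (hmaps hx)).comp x (hφ x hx))).congr_deriv (by
      simp only [Function.comp_apply]; ring)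
  hasDerivAt_deriv x hx := by
    have hfφ := (hf.hasDerivAt _ (hmaps hx)).comp x (hφ x hx)
    have hf'φ := (hf.hasDerivAt_deriv _ (hmaps hx)).comp x (hφ x hx)
    refine ((hm x hx).mul (((hμ x hx).mul hfφ).add ((hφ' x hx).mul hf'φ))).congr_deriv ?_
    simp only [Function.comp_apply, Pi.add_apply, Pi.mul_apply]
    linear_combination m x * f' (φ x) * hP x hx + m x * f (φ x) * hQ x hx

lemma comp_mul_ofReal {P Q f f' : ℂ → ℂ} {s : Set ℂ} {q : ℂ} (hf : SolvesLinearODEOn P Q f f' s)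
    (hP : ∀ p, q * P (q * p) = P p) (hQ : ∀ p, q ^ 2 * Q (q * p) = Q p) :
    SolvesLinearODEOn (fun u : ℝ ↦ P u) (fun u ↦ Q u) (fun u ↦ f (q * u))
      (fun u ↦ q * f' (q * u)) {u : ℝ | q * u ∈ s} where
  hasDerivAt u hu :=
    (((hf.hasDerivAt _ hu).comp (u : ℂ) (hasDerivAt_const_mul q)).comp_ofReal).congr_deriv
      (mul_comm _ _)
  hasDerivAt_deriv u hu :=
    (((hf.hasDerivAt_deriv _ hu).comp (u : ℂ)
      (hasDerivAt_const_mul q)).const_mul q).comp_ofReal.congr_deriv (by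
        linear_combination q * f' (q * u) * hP u + f (q * u) * hQ u)

section Uniqueness

variable {𝕜 : Type*} [NormedField 𝕜]

lemma lipschitzWith_companion {p q : 𝕜} {M : NNReal} (hp : ‖p‖₊ ≤ M) (hq : ‖q‖₊ ≤ M) :
    LipschitzWith (max 1 (M + M)) fun e : 𝕜 × 𝕜 ↦ (e.2, p * e.2 + q * e.1) := by
  have hmul {k : 𝕜} (hk : ‖k‖₊ ≤ M) : LipschitzWith M (k * ·) :=
    (lipschitzWith_smul k).weaken hk
  have hsnd : LipschitzWith M fun e : 𝕜 × 𝕜 ↦ p * e.2 := by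
    simpa [Function.comp_def] using (hmul hp).comp LipschitzWith.prod_snd
  have hfst : LipschitzWith M fun e : 𝕜 × 𝕜 ↦ q * e.1 := by
    simpa [Function.comp_def] using (hmul hq).comp LipschitzWith.prod_fst
  exact LipschitzWith.prod_snd.prodMk (hsnd.add hfst)

lemma eqOn_zero [NormedAlgebra ℝ 𝕜] {P Q f f' : ℝ → 𝕜} {α β t₀ : ℝ}
    (hf : SolvesLinearODEOn P Q f f' (Ioo α β)) (hP : ContinuousOn P (Ioo α β))
    (hQ : ContinuousOn Q (Ioo α β)) (ht₀ : t₀ ∈ Ioo α β) (hf₀ : f t₀ = 0) (hf'₀ : f' t₀ = 0) :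
    EqOn f 0 (Ioo α β) := by
  intro t ht
  obtain ⟨α', hα, hα'⟩ := exists_between (lt_min ht₀.1 ht.1)
  obtain ⟨β', hβ', hβ⟩ := exists_between (max_lt ht₀.2 ht.2)
  rw [lt_min_iff] at hα'
  rw [max_lt_iff] at hβ'
  have hsub : Icc α' β' ⊆ Ioo α β := Icc_subset_Ioo hα hβ
  obtain ⟨M, hM⟩ := isCompact_Icc.exists_bound_of_continuousOn
    ((hP.mono hsub).prodMk (hQ.mono hsub))
  have hlip (u : ℝ) (hu : u ∈ Ioo α' β') : LipschitzOnWith (max 1 (M.toNNReal + M.toNNReal))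
      (fun e : 𝕜 × 𝕜 ↦ (e.2, P u * e.2 + Q u * e.1)) univ := by
    have hMu := hM u (Ioo_subset_Icc_self hu)
    refine (lipschitzWith_companion ?_ ?_).lipschitzOnWith <;> rw [← norm_toNNReal]
    · exact Real.toNNReal_le_toNNReal ((norm_fst_le _).trans hMu)
    · exact Real.toNNReal_le_toNNReal ((norm_snd_le _).trans hMu)
  have hsystem (u : ℝ) (hu : u ∈ Ioo α' β') :
      HasDerivAt (fun v ↦ (f v, f' v)) (f' u, P u * f' u + Q u * f u) u :=
    have hu' := hsub (Ioo_subset_Icc_self hu)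
    (hf.hasDerivAt u hu').prodMk (hf.hasDerivAt_deriv u hu')
  have huniq := ODE_solution_unique_of_mem_Ioo hlip ⟨hα'.1, hβ'.1⟩
    (fun u hu ↦ ⟨hsystem u hu, mem_univ _⟩) (g := fun _ ↦ (0, 0))
    (fun u _ ↦ ⟨(hasDerivAt_const u _).congr_deriv (by ext <;> simp), mem_univ _⟩)
    (by simp [hf₀, hf'₀])
  exact congrArg Prod.fst (huniq ⟨hα'.2, hβ'.2⟩)

end Uniqueness

end SolvesLinearODEOn

end LinearODE

section HypergeometricODE

variable {𝕂 : Type*} [RCLike 𝕂] {a b c : 𝕂}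

/-- The coefficient of `f'` in the hypergeometric equation solved for `f''`; the coefficient of `f`
is `hypergeometricODECoeff₀`. -/
noncomputable def hypergeometricODECoeff₁ (a b c z : 𝕂) : 𝕂 :=
  -(c - (a + b + 1) * z) / (z * (1 - z))

/-- The coefficient of `f` in the hypergeometric equation solved for `f''`. -/
noncomputable def hypergeometricODECoeff₀ (a b z : 𝕂) : 𝕂 := a * b / (z * (1 - z))

/-- `f` solves the hypergeometric equation `z (1 - z) f'' + (c - (a + b + 1) z) f' = a b f` on `s`,
with derivative `f'`; the equation is solved for `f''`, so `0` and `1` should not belong to `s`. -/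
abbrev SolvesHypergeometricODEOn (a b c : 𝕂) (f f' : 𝕂 → 𝕂) (s : Set 𝕂) : Prop :=
  SolvesLinearODEOn (hypergeometricODECoeff₁ a b c) (hypergeometricODECoeff₀ a b) f f' s

lemma solvesHypergeometricODEOn_ordinaryHypergeometric (hc : ∀ n : ℕ, c ≠ -n) :
    SolvesHypergeometricODEOn a b c (₂F₁ a b c) (deriv (₂F₁ a b c)) (Metric.ball (0 : 𝕂) 1 \ {0})
    where
  hasDerivAt z hz :=
    (analyticOnNhd_ordinaryHypergeometric a b c z hz.1).differentiableAt.hasDerivAt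
  hasDerivAt_deriv z hz := by
    have hz₀ : z ≠ 0 := hz.2
    have hz₁ : 1 - z ≠ 0 := sub_ne_zero.mpr fun h ↦ by simp [← h] at hz
    refine (analyticOnNhd_ordinaryHypergeometric a b c z
      hz.1).deriv.differentiableAt.hasDerivAt.congr_deriv ?_
    rw [hypergeometricODECoeff₁, hypergeometricODECoeff₀]
    field_simp
    linear_combination ordinaryHypergeometric_ode (a := a) (b := b) hc hz.1

end HypergeometricODE

section Pullback

open Complex (slitPlane)

/-- The coefficient of `f'` in the common equation of the cubic and quartic pull-backs. -/
noncomputable def pullbackODECoeff₁ (a p : ℂ) : ℂ := -3 * a * p ^ 2 / (1 + p ^ 3)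

/-- The coefficient of `f` in the common equation of the cubic and quartic pull-backs. -/
noncomputable def pullbackODECoeff₀ (a p : ℂ) : ℂ := 9 * a * (1 - 2 * a) * p / (1 + p ^ 3) ^ 2

/-- The argument of the quartic pull-back. -/
noncomputable def quarticArg (p : ℂ) : ℂ := (1 + p) ^ 4 / (9 * (1 + p ^ 3))

lemma one_sub_quarticArg {p : ℂ} (hp : 1 + p ^ 3 ≠ 0) :
    1 - quarticArg p = (1 + p) * (2 - p) ^ 3 / (9 * (1 + p ^ 3)) := by
  rw [quarticArg]; field_simp; ring

variable {a k : ℂ} {F F' : ℂ → ℂ}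

lemma hasDerivAt_one_add_pow_three (p : ℂ) : HasDerivAt (fun p : ℂ ↦ 1 + p ^ 3) (3 * p ^ 2) p := by
  simpa using (hasDerivAt_pow 3 p).const_add 1

lemma one_sub_inv_one_add_pow_three {p : ℂ} (hp : 1 + p ^ 3 ≠ 0) :
    1 - (1 + p ^ 3)⁻¹ = p ^ 3 * (1 + p ^ 3)⁻¹ := by
  field_simp; ring

lemma SolvesHypergeometricODEOn.cubic_pullback
    (hF : SolvesHypergeometricODEOn a (1 - 2 * a) (4 / 3 - a) F F' (Metric.ball 0 1 \ {0})) :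
    SolvesLinearODEOn (pullbackODECoeff₁ a) (pullbackODECoeff₀ a) (fun p ↦ F (1 + p ^ 3)⁻¹)
      (fun p ↦ -(3 * p ^ 2) / (1 + p ^ 3) ^ 2 * F' (1 + p ^ 3)⁻¹) {p | 1 < ‖1 + p ^ 3‖} := by
  have hne {p : ℂ} (hp : 1 < ‖1 + p ^ 3‖) : 1 + p ^ 3 ≠ 0 :=
    norm_pos_iff.mp (zero_lt_one.trans hp)
  have hne₀ {p : ℂ} (hp : 1 < ‖1 + p ^ 3‖) : p ≠ 0 := by rintro rfl; simp at hp
  have hpull := hF.pullback (P₁ := pullbackODECoeff₁ a) (Q₁ := pullbackODECoeff₀ a)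
    (s := {p | 1 < ‖1 + p ^ 3‖}) (φ := fun p ↦ (1 + p ^ 3)⁻¹)
    (φ' := fun p ↦ -(3 * p ^ 2) / (1 + p ^ 3) ^ 2)
    (φ'' := fun p ↦ 6 * p * (2 * p ^ 3 - 1) / (1 + p ^ 3) ^ 3)
    (m := fun _ ↦ 1) (μ := fun _ ↦ 0) (μ' := fun _ ↦ 0)
    (fun p hp ↦ ⟨by simpa using inv_lt_one_of_one_lt₀ hp, inv_ne_zero (hne hp)⟩)
    (fun p hp ↦ (hasDerivAt_one_add_pow_three p).inv (hne hp)) ?_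
    (fun p _ ↦ by simpa using hasDerivAt_const p (1 : ℂ)) (fun p _ ↦ hasDerivAt_const p 0) ?_ ?_
  · simpa using hpull
  · intro p hp
    have hp' := hne hp
    refine (((hasDerivAt_pow 2 p).const_mul 3).neg.div
      ((hasDerivAt_one_add_pow_three p).pow 2) (pow_ne_zero 2 hp')).congr_deriv ?_
    simp only [Pi.neg_apply, Pi.pow_apply]
    field_simp
    ring
  · intro p hp
    have hp₁ := hne hp
    have hp₀ := hne₀ hp
    rw [hypergeometricODECoeff₁, pullbackODECoeff₁, one_sub_inv_one_add_pow_three hp₁]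
    field_simp
    ring
  · intro p hp
    have hp₁ := hne hp
    rw [hypergeometricODECoeff₀, pullbackODECoeff₀, one_sub_inv_one_add_pow_three hp₁]
    field_simp
    ring

lemma hasDerivAt_quarticArg {p : ℂ} (hp : 1 + p ^ 3 ≠ 0) :
    HasDerivAt quarticArg ((1 + p) ^ 4 * (2 - p) ^ 2 / (9 * (1 + p ^ 3) ^ 2)) p := by
  refine ((((hasDerivAt_id p).const_add 1).pow 4).div
    ((hasDerivAt_one_add_pow_three p).const_mul 9) (mul_ne_zero (by norm_num) hp)).congr_deriv ?_
  simp only [Pi.pow_apply, id_eq]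
  field_simp
  ring

lemma hasDerivAt_deriv_quarticArg {p : ℂ} (hp : 1 + p ^ 3 ≠ 0) :
    HasDerivAt (fun p ↦ (1 + p) ^ 4 * (2 - p) ^ 2 / (9 * (1 + p ^ 3) ^ 2))
      (2 * (1 + p) ^ 4 * (2 - p) * (1 - 2 * p) / (3 * (1 + p ^ 3) ^ 3)) p := by
  refine (((((hasDerivAt_id p).const_add 1).pow 4).mul (((hasDerivAt_id p).const_sub 2).pow 2)).div
    (((hasDerivAt_one_add_pow_three p).pow 2).const_mul 9)
    (mul_ne_zero (by norm_num) (pow_ne_zero 2 hp))).congr_deriv ?_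
  simp only [Pi.pow_apply, Pi.mul_apply, id_eq]
  field_simp
  ring

lemma hasDerivAt_one_add_div_cpow {b p : ℂ} (hp : (1 + p) / k ∈ slitPlane) :
    HasDerivAt (fun p ↦ ((1 + p) / k) ^ b) (((1 + p) / k) ^ b * (b / (1 + p))) p := by
  have hne : (1 + p) / k ≠ 0 := Complex.slitPlane_ne_zero hp
  have hnum : 1 + p ≠ 0 := fun h ↦ hne (by simp [h])
  have hk : k ≠ 0 := fun h ↦ hne (by simp [h])
  refine ((((hasDerivAt_id p).const_add 1).div_const k).cpow_const hp).congr_deriv ?_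
  rw [id_eq, Complex.cpow_sub _ _ hne, Complex.cpow_one]
  field_simp

/-- A domain of the quartic pull-back, for the branch of `((1 + p) / k) ^ (1 - 2 * a)` that is cut
where `1 + p` lies on the ray through `-k`. -/
def quarticDomain (k : ℂ) : Set ℂ :=
  {p | 1 + p ^ 3 ≠ 0 ∧ (1 + p) / k ∈ slitPlane ∧ ‖quarticArg p‖ < 1}

lemma SolvesHypergeometricODEOn.quartic_pullback
    (hF : SolvesHypergeometricODEOn a (1 - 2 * a) (4 / 3 - a) F F' (Metric.ball 0 1 \ {0})) :
    SolvesLinearODEOn (pullbackODECoeff₁ a) (pullbackODECoeff₀ a)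
      (fun p ↦ ((1 + p) / k) ^ (1 - 2 * a) * F (quarticArg p))
      (fun p ↦ ((1 + p) / k) ^ (1 - 2 * a) * ((1 - 2 * a) / (1 + p) * F (quarticArg p) +
        (1 + p) ^ 4 * (2 - p) ^ 2 / (9 * (1 + p ^ 3) ^ 2) * F' (quarticArg p)))
      (quarticDomain k) := by
  have hnum {p : ℂ} (hp : 1 + p ^ 3 ≠ 0) : 1 + p ≠ 0 := fun h ↦
    hp (by linear_combination (1 - p + p ^ 2) * h)
  have htwo {p : ℂ} (hp : p ∈ quarticDomain k) : 2 - p ≠ 0 := fun h ↦ by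
    have hlt := hp.2.2
    rw [← sub_eq_zero.mp h, quarticArg] at hlt
    norm_num at hlt
  refine hF.pullback ?_ (fun p hp ↦ hasDerivAt_quarticArg hp.1)
    (fun p hp ↦ hasDerivAt_deriv_quarticArg hp.1) (fun p hp ↦ hasDerivAt_one_add_div_cpow hp.2.1)
    (μ' := fun p ↦ (1 - 2 * a) * (-1 / (1 + p) ^ 2)) (fun p hp ↦ ?_) (fun p hp ↦ ?_) fun p hp ↦ ?_
  · exact fun p hp ↦ ⟨by simpa using hp.2.2, div_ne_zero (pow_ne_zero 4 (hnum hp.1))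
      (mul_ne_zero (by norm_num) hp.1)⟩
  · simpa only [div_eq_mul_inv] using!
      (((hasDerivAt_id p).const_add 1).inv (hnum hp.1)).const_mul (1 - 2 * a)
  · have hp₁ := hnum hp.1
    have hp₃ := hp.1
    have hp₂ := htwo hp
    rw [hypergeometricODECoeff₁, pullbackODECoeff₁, one_sub_quarticArg hp.1, quarticArg]
    field_simp
    ring
  · have hp₁ := hnum hp.1
    have hp₃ := hp.1
    rw [hypergeometricODECoeff₀, pullbackODECoeff₀, pullbackODECoeff₁, one_sub_quarticArg hp.1,
      quarticArg]
    field_simp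
    ring

end Pullback

section Connection

variable {a q : ℂ} {F F' : ℂ → ℂ} {u : ℝ}

lemma mul_pullbackODECoeff₁_mul (hq : q ^ 3 = 1) (p : ℂ) :
    q * pullbackODECoeff₁ a (q * p) = pullbackODECoeff₁ a p := by
  rw [pullbackODECoeff₁, pullbackODECoeff₁, mul_pow, mul_pow, hq, one_mul, mul_div_assoc']
  congr 1
  linear_combination -3 * a * p ^ 2 * hq

lemma sq_mul_pullbackODECoeff₀_mul (hq : q ^ 3 = 1) (p : ℂ) :
    q ^ 2 * pullbackODECoeff₀ a (q * p) = pullbackODECoeff₀ a p := by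
  rw [pullbackODECoeff₀, pullbackODECoeff₀, mul_pow, hq, one_mul, mul_div_assoc']
  congr 1
  linear_combination 9 * a * (1 - 2 * a) * p * hq

lemma pow_three_eq_one_of_sq_add_self_add_one (hq : q ^ 2 + q + 1 = 0) : q ^ 3 = 1 := by
  linear_combination (q - 1) * hq

lemma sq_one_add_two_mul (hq : q ^ 2 + q + 1 = 0) : (1 + 2 * q) ^ 2 = -3 := by
  linear_combination 4 * hq

lemma one_add_two_mul_pow_four (hq : q ^ 2 + q + 1 = 0) : (1 + 2 * q) ^ 4 = 9 := by
  linear_combination ((1 + 2 * q) ^ 2 - 3) * sq_one_add_two_mul hq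

lemma one_add_two_mul_ne_zero (hq : q ^ 2 + q + 1 = 0) : 1 + 2 * q ≠ 0 := fun h ↦ by
  simpa [h] using sq_one_add_two_mul hq

lemma re_eq_of_sq_add_self_add_one (hq : q ^ 2 + q + 1 = 0) : q.re = -1 / 2 := by
  have hre : q.re ^ 2 - q.im ^ 2 + q.re + 1 = 0 := by
    simpa [pow_two] using congrArg Complex.re hq
  have him : q.im * (2 * q.re + 1) = 0 := by
    have him' : q.re * q.im + q.im * q.re + q.im = 0 := by
      simpa [pow_two] using congrArg Complex.im hq
    linear_combination him'
  rcases mul_eq_zero.mp him with h | h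
  · nlinarith [sq_nonneg (2 * q.re + 1)]
  · linarith

lemma im_sq_eq_of_sq_add_self_add_one (hq : q ^ 2 + q + 1 = 0) : q.im ^ 2 = 3 / 4 := by
  have hre : q.re ^ 2 - q.im ^ 2 + q.re + 1 = 0 := by
    simpa [pow_two] using congrArg Complex.re hq
  rw [re_eq_of_sq_add_self_add_one hq] at hre
  linarith

lemma normSq_one_add_mul_ofReal (hq : q ^ 2 + q + 1 = 0) (u : ℝ) :
    Complex.normSq (1 + q * u) = 1 - u + u ^ 2 := by
  simp only [Complex.normSq_apply, Complex.add_re, Complex.one_re, Complex.re_mul_ofReal,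
    Complex.add_im, Complex.one_im, Complex.im_mul_ofReal]
  linear_combination (2 * u + u ^ 2 * (q.re - 1 / 2)) * re_eq_of_sq_add_self_add_one hq +
    u ^ 2 * im_sq_eq_of_sq_add_self_add_one hq

lemma re_one_add_mul_ofReal_div (hq : q ^ 2 + q + 1 = 0) (u : ℝ) :
    ((1 + q * u) / (1 + 2 * q)).re = u / 2 := by
  have hdiv : (1 + q * u) / (1 + 2 * q) = (q * (u - 2) + (2 * u - 1)) / (3 : ℝ) := by
    rw [div_eq_div_iff (one_add_two_mul_ne_zero hq) (by norm_num)]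
    push_cast
    linear_combination (4 - 2 * u) * hq
  have hnum : (q * (u - 2) + (2 * u - 1)).re = q.re * (u - 2) + (2 * u - 1) := by simp
  rw [hdiv, Complex.div_ofReal_re, hnum, re_eq_of_sq_add_self_add_one hq]
  ring

/-- On the ray `‖quarticArg (q * u)‖ = (1 - u + u ^ 2) / (9 * (1 + u))`, which is less than `1`
for `u < 5 + √33`; the bound `10` is a convenient choice. -/
lemma mul_ofReal_mem_quarticDomain (hq : q ^ 2 + q + 1 = 0) (hu : u ∈ Set.Ioo 0 10) :
    q * u ∈ quarticDomain (1 + 2 * q) := by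
  obtain ⟨hu₀, hu₁⟩ := hu
  have hcube : 1 + (q * u) ^ 3 = ((1 + u ^ 3 : ℝ) : ℂ) := by
    rw [mul_pow, pow_three_eq_one_of_sq_add_self_add_one hq]; push_cast; ring
  have hpos : 0 < 1 + u ^ 3 := by positivity
  refine ⟨hcube ▸ Complex.ofReal_ne_zero.mpr hpos.ne', .inl ?_, ?_⟩
  · rw [re_one_add_mul_ofReal_div hq]
    exact half_pos hu₀
  · have hnum : ‖1 + q * u‖ ^ 4 = (1 - u + u ^ 2) ^ 2 := by
      rw [← normSq_one_add_mul_ofReal hq, Complex.normSq_eq_norm_sq]; ring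
    have hfactor : 0 < 1 - u + u ^ 2 := by nlinarith [sq_nonneg (u - 1)]
    rw [quarticArg, hcube, norm_div, norm_pow, norm_mul, hnum, Complex.norm_real,
      Real.norm_of_nonneg hpos.le, RCLike.norm_ofNat, div_lt_one (by positivity)]
    calc (1 - u + u ^ 2) ^ 2 < (1 - u + u ^ 2) * (9 * (1 + u)) := by
          rw [pow_two]; gcongr; nlinarith
      _ = 9 * (1 + u ^ 3) := by ring

/-- The solution of the common equation obtained by restricting the quartic pull-back to the ray
through a cube root of unity `q`; dividing by `1 + 2 * q` normalises the power to be `1`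
at `u = 2`. -/
noncomputable def quarticRay (a : ℂ) (F : ℂ → ℂ) (q : ℂ) (u : ℝ) : ℂ :=
  ((1 + q * u) / (1 + 2 * q)) ^ (1 - 2 * a) * F (quarticArg (q * u))

/-- The derivative of `quarticRay a F q`, where `F'` stands for the derivative of `F`. -/
noncomputable def quarticRayDeriv (a : ℂ) (F F' : ℂ → ℂ) (q : ℂ) (u : ℝ) : ℂ :=
  q * (((1 + q * u) / (1 + 2 * q)) ^ (1 - 2 * a) *
    ((1 - 2 * a) / (1 + q * u) * F (quarticArg (q * u)) +
      (1 + q * u) ^ 4 * (2 - q * u) ^ 2 / (9 * (1 + (q * u) ^ 3) ^ 2) * F' (quarticArg (q * u))))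

lemma quarticArg_mul_two (hq : q ^ 2 + q + 1 = 0) : quarticArg (q * (2 : ℝ)) = 1 / 9 := by
  rw [quarticArg, mul_pow, pow_three_eq_one_of_sq_add_self_add_one hq]
  rw [Complex.ofReal_ofNat, mul_comm q, one_add_two_mul_pow_four hq]
  norm_num

lemma quarticRay_two (hq : q ^ 2 + q + 1 = 0) : quarticRay a F q 2 = F (1 / 9) := by
  have hbase : (1 + q * (2 : ℝ)) / (1 + 2 * q) = 1 := by
    rw [Complex.ofReal_ofNat, mul_comm q]; exact div_self (one_add_two_mul_ne_zero hq)
  rw [quarticRay, quarticArg_mul_two hq, hbase, Complex.one_cpow, one_mul]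

lemma quarticRayDeriv_two (hq : q ^ 2 + q + 1 = 0) :
    quarticRayDeriv a F F' q 2 =
      q * (1 - 2 * a) / (1 + 2 * q) * F (1 / 9) - 4 / 27 * q ^ 2 * F' (1 / 9) := by
  have hne := one_add_two_mul_ne_zero hq
  have hq₃ := pow_three_eq_one_of_sq_add_self_add_one hq
  have hsub : (2 - 2 * q) ^ 2 = -12 * q := by linear_combination 4 * hq
  rw [quarticRayDeriv, quarticArg_mul_two hq, Complex.ofReal_ofNat, mul_comm q 2, div_self hne,
    Complex.one_cpow, mul_pow, hq₃, one_add_two_mul_pow_four hq, hsub]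
  ring

lemma SolvesHypergeometricODEOn.solvesLinearODEOn_quarticRay
    (hF : SolvesHypergeometricODEOn a (1 - 2 * a) (4 / 3 - a) F F' (Metric.ball 0 1 \ {0}))
    (hq : q ^ 2 + q + 1 = 0) :
    SolvesLinearODEOn (fun u : ℝ ↦ pullbackODECoeff₁ a u) (fun u ↦ pullbackODECoeff₀ a u)
      (quarticRay a F q) (quarticRayDeriv a F F' q) (Set.Ioo 0 10) :=
  have hq₃ := pow_three_eq_one_of_sq_add_self_add_one hq
  (hF.quartic_pullback.comp_mul_ofReal (mul_pullbackODECoeff₁_mul hq₃)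
    (sq_mul_pullbackODECoeff₀_mul hq₃)).mono fun _ hu ↦ mul_ofReal_mem_quarticDomain hq hu

lemma SolvesHypergeometricODEOn.solvesLinearODEOn_cubic_ray
    (hF : SolvesHypergeometricODEOn a (1 - 2 * a) (4 / 3 - a) F F' (Metric.ball 0 1 \ {0})) :
    SolvesLinearODEOn (fun u : ℝ ↦ pullbackODECoeff₁ a u) (fun u ↦ pullbackODECoeff₀ a u)
      (fun u ↦ F (1 + u ^ 3)⁻¹) (fun u ↦ -(3 * u ^ 2) / (1 + u ^ 3) ^ 2 * F' (1 + u ^ 3)⁻¹)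
      (Set.Ioi 0) := by
  have hray := (hF.cubic_pullback.comp_mul_ofReal (q := 1)
    (by simp) (by simp)).mono (s := Set.Ioi 0) fun u (hu : 0 < u) ↦ ?_
  · simpa using hray
  · have hnorm : ‖(1 + u ^ 3 : ℂ)‖ = 1 + u ^ 3 := by
      rw [← Complex.ofReal_one, ← Complex.ofReal_pow, ← Complex.ofReal_add,
        Complex.norm_of_nonneg (by positivity)]
    simpa [hnorm] using pow_pos hu 3

lemma one_add_ofReal_pow_three_ne_zero (hu : 0 < u) : (1 + u ^ 3 : ℂ) ≠ 0 := by
  exact_mod_cast (show 0 < 1 + u ^ 3 by positivity).ne'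

lemma continuousOn_pullbackODECoeff₁ :
    ContinuousOn (fun u : ℝ ↦ pullbackODECoeff₁ a u) (Set.Ioi 0) := by
  unfold pullbackODECoeff₁
  exact ContinuousOn.div (by fun_prop) (by fun_prop) fun _ ↦ one_add_ofReal_pow_three_ne_zero

lemma continuousOn_pullbackODECoeff₀ :
    ContinuousOn (fun u : ℝ ↦ pullbackODECoeff₀ a u) (Set.Ioi 0) := by
  unfold pullbackODECoeff₀
  exact ContinuousOn.div (by fun_prop) (by fun_prop) fun _ hu ↦
    pow_ne_zero 2 (one_add_ofReal_pow_three_ne_zero hu)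

/-- Two solutions span the common equation, so a linear relation holds; its coefficients are read
off at `u = 2`, where all three arguments of `F` equal `1 / 9`. -/
lemma SolvesHypergeometricODEOn.cubic_ray_add_quarticRay_eq_zero
    (hF : SolvesHypergeometricODEOn a (1 - 2 * a) (4 / 3 - a) F F' (Metric.ball 0 1 \ {0}))
    (hq : q ^ 2 + q + 1 = 0) (hu : u ∈ Set.Ioo 0 10) :
    F (1 + u ^ 3)⁻¹ + q ^ 2 * quarticRay a F q u + q * quarticRay a F (q ^ 2) u = 0 := by
  have hq₃ := pow_three_eq_one_of_sq_add_self_add_one hq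
  have hq' : (q ^ 2) ^ 2 + q ^ 2 + 1 = 0 := by linear_combination hq + q * hq₃
  have hsol := ((hF.solvesLinearODEOn_cubic_ray.mono Set.Ioo_subset_Ioi_self).add
    ((hF.solvesLinearODEOn_quarticRay hq).const_mul (q ^ 2))).add
    ((hF.solvesLinearODEOn_quarticRay hq').const_mul q)
  have hninth : (1 + ((2 : ℝ) : ℂ) ^ 3)⁻¹ = 1 / 9 := by norm_num
  refine hsol.eqOn_zero (t₀ := 2) (continuousOn_pullbackODECoeff₁.mono Set.Ioo_subset_Ioi_self)
    (continuousOn_pullbackODECoeff₀.mono Set.Ioo_subset_Ioi_self) (by norm_num) ?_ ?_ hu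
  · rw [quarticRay_two hq, quarticRay_two hq', hninth]
    linear_combination F (1 / 9) * hq
  · have hconj : 1 + 2 * q ^ 2 = -(1 + 2 * q) := by linear_combination 2 * hq
    rw [quarticRayDeriv_two hq, quarticRayDeriv_two hq', hninth, hconj, Complex.ofReal_ofNat,
      div_neg]
    linear_combination -4 / 27 * F' (1 / 9) * (hq + (q + q ^ 2) * hq₃)

end Connection

section SpecialValues

variable {a q : ℂ} {F F' : ℂ → ℂ}

lemma ofReal_sqrt_sq {x : ℝ} (hx : 0 ≤ x) : (√x : ℂ) ^ 2 = x := by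
  exact_mod_cast Real.sq_sqrt hx

lemma ofReal_sqrt_three_sq : (√3 : ℂ) ^ 2 = 3 := by
  simpa using ofReal_sqrt_sq (x := 3) (by norm_num)

lemma inv_one_add_sqrt_three_sub_one_pow_three : (1 + (√3 - 1) ^ 3)⁻¹ = z₀ := by
  have hsq : √3 ^ 2 = 3 := Real.sq_sqrt (by norm_num)
  have hcube : 1 + (√3 - 1) ^ 3 = 6 * √3 - 9 := by linear_combination (√3 - 3) * hsq
  have hpos : 0 < 6 * √3 - 9 := by nlinarith [Real.sqrt_nonneg 3]
  rw [hcube, z₀, inv_eq_one_div, div_eq_div_iff hpos.ne' (by positivity)]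
  linear_combination -6 * hsq

lemma quarticArg_mul_sqrt_three_sub_one (hq : q ^ 2 + q + 1 = 0) :
    quarticArg (q * (√3 - 1 : ℝ)) = z₁ := by
  have hsq := ofReal_sqrt_three_sq
  have hsquare : (1 + q * (√3 - 1)) ^ 2 = (2 * √3 - 3) * (1 + 2 * q) := by
    linear_combination (√3 - 1) ^ 2 * hq - (q + 1) * hsq
  have hfourth : (1 + q * (√3 - 1)) ^ 4 = -3 * (2 * √3 - 3) ^ 2 := by
    rw [pow_mul _ 2 2, hsquare, mul_pow, sq_one_add_two_mul hq, mul_comm]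
  have hcube : 1 + (√3 - 1) ^ 3 = 3 * (2 * √3 - 3 : ℂ) := by linear_combination (√3 - 3) * hsq
  have hne₃ : (√3 : ℂ) ≠ 0 := by simp
  rw [quarticArg, mul_pow q, pow_three_eq_one_of_sq_add_self_add_one hq, one_mul, z₁]
  push_cast
  rw [hfourth, hcube]
  field_simp
  linear_combination -6 * hsq

lemma cos_pi_div_twelve : Real.cos (π / 12) = √2 * (1 + √3) / 4 := by
  rw [show π / 12 = π / 3 - π / 4 by ring, Real.cos_sub, Real.cos_pi_div_three,
    Real.cos_pi_div_four, Real.sin_pi_div_three, Real.sin_pi_div_four]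
  ring

lemma cos_pi_div_twelve_pos : 0 < Real.cos (π / 12) := by
  rw [cos_pi_div_twelve]
  positivity

lemma ofReal_mul_exp_cpow {r θ : ℝ} (hr : 0 < r) (hθ : θ ∈ Set.Ioc (-π) π) (b : ℂ) :
    (r * Complex.exp (θ * Complex.I)) ^ b = r ^ b * Complex.exp (b * (θ * Complex.I)) := by
  have hlog : Complex.log (Complex.exp (θ * Complex.I)) = θ * Complex.I :=
    Complex.log_exp (by simpa using hθ.1) (by simpa using hθ.2)
  have hr' : (r : ℂ) ≠ 0 := Complex.ofReal_ne_zero.mpr hr.ne'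
  rw [Complex.cpow_def_of_ne_zero (mul_ne_zero hr' (Complex.exp_ne_zero _)),
    Complex.cpow_def_of_ne_zero hr', Complex.log_ofReal_mul hr (Complex.exp_ne_zero _), hlog,
    Complex.ofReal_log hr.le, ← Complex.exp_add]
  ring_nf

lemma sq_add_self_add_one_of_one_add_two_mul_eq {σ : ℝ} (hσ : σ = 1 ∨ σ = -1)
    (hq : 1 + 2 * q = σ * √3 * Complex.I) : q ^ 2 + q + 1 = 0 := by
  have hsq : (1 + 2 * q) ^ 2 = -3 := by
    rw [hq, mul_pow, mul_pow, ofReal_sqrt_three_sq, Complex.I_sq]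
    rcases hσ with rfl | rfl <;> norm_num
  linear_combination hsq / 4

lemma one_add_mul_sqrt_three_sub_one_div {σ : ℝ} (hσ : σ = 1 ∨ σ = -1)
    (hq : 1 + 2 * q = σ * √3 * Complex.I) :
    (1 + q * (√3 - 1 : ℝ)) / (1 + 2 * q) =
      ((2 * Real.cos (π / 12))⁻¹ : ℝ) * Complex.exp ((-σ * (π / 4) : ℝ) * Complex.I) := by
  have hsq₂ : (√2 : ℂ) ^ 2 = 2 := by simpa using ofReal_sqrt_sq zero_le_two
  have hsq₃ := ofReal_sqrt_three_sq
  have hexp : Complex.exp ((-σ * (π / 4) : ℝ) * Complex.I) = √2 / 2 * (1 - σ * Complex.I) := by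
    rw [Complex.exp_mul_I, ← Complex.ofReal_cos, ← Complex.ofReal_sin]
    rcases hσ with rfl | rfl
    · rw [neg_one_mul, Real.cos_neg, Real.sin_neg, Real.cos_pi_div_four, Real.sin_pi_div_four]
      push_cast; ring
    · rw [neg_neg, one_mul, Real.cos_pi_div_four, Real.sin_pi_div_four]
      push_cast; ring
  have hσ' : (σ : ℂ) ^ 2 = 1 := by rcases hσ with rfl | rfl <;> norm_num
  have hcos : (2 * Real.cos (π / 12))⁻¹ = √2 * (√3 - 1) / 2 := by
    rw [cos_pi_div_twelve, inv_eq_one_div, div_eq_iff (by positivity)]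
    linear_combination -1 / 4 * (√3 ^ 2 - 1) * Real.sq_sqrt (show (0 : ℝ) ≤ 2 by norm_num) -
      1 / 2 * Real.sq_sqrt (show (0 : ℝ) ≤ 3 by norm_num)
  have hne : σ * √3 * Complex.I ≠ 0 := by
    rcases hσ with rfl | rfl <;> simp
  rw [hq, div_eq_iff hne, hexp, hcos]
  push_cast
  linear_combination (√3 - 1) / 2 * hq + √3 * (√3 - 1) / 4 * σ * Complex.I *
    (σ * Complex.I - 1) * hsq₂ + √3 * (√3 - 1) / 2 * (Complex.I ^ 2 * hσ' + Complex.I_sq) -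
    1 / 2 * hsq₃

lemma quarticRay_sqrt_three_sub_one {σ : ℝ} (hσ : σ = 1 ∨ σ = -1)
    (hq : 1 + 2 * q = σ * √3 * Complex.I) :
    quarticRay a F q (√3 - 1) = (2 * Real.cos (π / 12) : ℝ) ^ (2 * a - 1) *
      Complex.exp ((1 - 2 * a) * ((-σ * (π / 4) : ℝ) * Complex.I)) * F z₁ := by
  have hq' := sq_add_self_add_one_of_one_add_two_mul_eq hσ hq
  have hcos := cos_pi_div_twelve_pos
  have hangle : -σ * (π / 4) ∈ Set.Ioc (-π) π := by
    rcases hσ with rfl | rfl <;> constructor <;> linarith [pi_pos]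
  have harg : ((2 * Real.cos (π / 12) : ℝ) : ℂ).arg ≠ π := by
    rw [Complex.arg_ofReal_of_nonneg (by positivity)]; exact pi_ne_zero.symm
  rw [quarticRay, quarticArg_mul_sqrt_three_sub_one hq',
    one_add_mul_sqrt_three_sub_one_div hσ hq, ofReal_mul_exp_cpow (by positivity) hangle,
    Complex.ofReal_inv, Complex.inv_cpow _ _ harg, ← Complex.cpow_neg, neg_sub]

lemma two_mul_two_mul_ofReal_cpow {x : ℝ} (hx : 0 ≤ x) (a : ℂ) :
    2 * ((2 * x : ℝ) : ℂ) ^ (2 * a - 1) = 4 ^ a * x ^ (2 * a - 1) := by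
  have hfour : (2 : ℂ) ^ (2 * a) = 4 ^ a := by
    rw [show (4 : ℂ) = 2 ^ 2 by norm_num]
    exact_mod_cast Complex.natCast_cpow_natCast_mul 2 2 a
  have hsplit := Complex.mul_cpow_ofReal_nonneg zero_le_two hx (2 * a - 1)
  rw [Complex.ofReal_ofNat] at hsplit
  rw [Complex.ofReal_mul, Complex.ofReal_ofNat, hsplit, Complex.cpow_sub _ _ two_ne_zero,
    Complex.cpow_one, hfour]
  ring

lemma exp_two_pi_div_three_mul_I :
    Complex.exp ((2 * π / 3 : ℝ) * Complex.I) = (-1 + √3 * Complex.I) / 2 := by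
  have hangle : 2 * π / 3 = π - π / 3 := by ring
  rw [Complex.exp_mul_I, ← Complex.ofReal_cos, ← Complex.ofReal_sin, hangle, Real.cos_pi_sub,
    Real.sin_pi_sub, Real.cos_pi_div_three, Real.sin_pi_div_three]
  push_cast; ring

lemma exp_mul_exp_add_exp_mul_exp (a : ℂ) :
    Complex.exp (-((2 * π / 3 : ℝ) * Complex.I)) *
          Complex.exp ((1 - 2 * a) * ((-1 * (π / 4) : ℝ) * Complex.I)) +
        Complex.exp ((2 * π / 3 : ℝ) * Complex.I) *
          Complex.exp ((1 - 2 * a) * ((-(-1) * (π / 4) : ℝ) * Complex.I)) =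
      -(2 * Complex.cos (π / 2 * (a + 1 / 6))) := by
  have hangle : π / 2 * (a + 1 / 6) = π - (2 * π / 3 + (1 - 2 * a) * (π / 4)) := by ring
  rw [hangle, Complex.cos_pi_sub, mul_neg, neg_neg, Complex.two_cos, ← Complex.exp_add,
    ← Complex.exp_add, add_comm]
  push_cast
  ring_nf

lemma SolvesHypergeometricODEOn.apply_z₀
    (hF : SolvesHypergeometricODEOn a (1 - 2 * a) (4 / 3 - a) F F' (Metric.ball 0 1 \ {0})) :
    F z₀ = 4 ^ a * (Real.cos (π / 12) : ℂ) ^ (2 * a - 1) *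
      Complex.cos (π / 2 * (a + 1 / 6)) * F z₁ := by
  set ω : ℂ := Complex.exp ((2 * π / 3 : ℝ) * Complex.I) with hω
  have hω_eq : 1 + 2 * ω = (1 : ℝ) * √3 * Complex.I := by
    rw [hω, exp_two_pi_div_three_mul_I]; push_cast; ring
  have hω_root := sq_add_self_add_one_of_one_add_two_mul_eq (.inl rfl) hω_eq
  have hω_sq_eq : 1 + 2 * ω ^ 2 = (-1 : ℝ) * √3 * Complex.I := by
    push_cast at hω_eq ⊢
    linear_combination 2 * hω_root - hω_eq
  have hω_sq : ω ^ 2 = Complex.exp (-((2 * π / 3 : ℝ) * Complex.I)) := by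
    rw [Complex.exp_neg, ← hω]
    exact eq_inv_of_mul_eq_one_left (pow_three_eq_one_of_sq_add_self_add_one hω_root)
  have hmem : √3 - 1 ∈ Set.Ioo (0 : ℝ) 10 := by
    constructor <;> nlinarith [Real.sq_sqrt (show (0 : ℝ) ≤ 3 by norm_num), Real.sqrt_nonneg 3]
  have hz₀ : (1 + ((√3 - 1 : ℝ) : ℂ) ^ 3)⁻¹ = (z₀ : ℂ) := by
    exact_mod_cast congrArg Complex.ofReal inv_one_add_sqrt_three_sub_one_pow_three
  have hconn := hF.cubic_ray_add_quarticRay_eq_zero hω_root hmem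
  rw [hz₀, quarticRay_sqrt_three_sub_one (.inl rfl) hω_eq,
    quarticRay_sqrt_three_sub_one (.inr rfl) hω_sq_eq] at hconn
  have hphase := exp_mul_exp_add_exp_mul_exp a
  rw [← hω_sq, ← hω] at hphase
  linear_combination hconn - (2 * Real.cos (π / 12) : ℝ) ^ (2 * a - 1) * F z₁ * hphase +
    Complex.cos (π / 2 * (a + 1 / 6)) * F z₁ *
      two_mul_two_mul_ofReal_cpow cos_pi_div_twelve_pos.le a

end SpecialValues

lemma ofReal_hyp2F1 (a b c z : ℝ) : (hyp2F1 a b c z : ℂ) = ₂F₁ (a : ℂ) b c (z : ℂ) := by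
  have heval (x : ℝ) (n : ℕ) :
      (((ascPochhammer ℝ n).eval x : ℝ) : ℂ) = (ascPochhammer ℂ n).eval (x : ℂ) := by
    rw [← ascPochhammer_map Complex.ofRealHom, Polynomial.eval_map]
    exact (Polynomial.eval₂_at_apply Complex.ofRealHom x).symm
  rw [hyp2F1, ordinaryHypergeometric_eq_tsum, Complex.ofReal_tsum]
  refine tsum_congr fun n ↦ ?_
  push_cast [heval]
  rw [smul_eq_mul]
  ring

theorem beukers_forsgard_ratio_general (a : ℂ) (hc : ∀ n : ℕ, 4 / 3 - a ≠ -n) :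
    ₂F₁ a (1 - 2 * a) (4 / 3 - a) (z₀ : ℂ) =
      4 ^ a * (Real.cos (π / 12) : ℂ) ^ (2 * a - 1) * Complex.cos (π / 2 * (a + 1 / 6)) *
        ₂F₁ a (1 - 2 * a) (4 / 3 - a) (z₁ : ℂ) :=
  (solvesHypergeometricODEOn_ordinaryHypergeometric hc).apply_z₀

/-- Oscillating ratio of Beukers–Forsgård evaluations. -/
theorem beukers_forsgard_ratio (a : ℝ) (hc : ∀ n : ℕ, 4/3 - a ≠ -(n : ℝ)) :
    hyp2F1 a (1 - 2*a) (4/3 - a) z₀ =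
      (4:ℝ) ^ a * Real.cos (π/12) ^ (2*a - 1) * Real.cos (π/2 * (a + 1/6)) *
        hyp2F1 a (1 - 2*a) (4/3 - a) z₁ := by
  have hgeneral := beukers_forsgard_ratio_general a fun n h ↦
    hc n (Complex.ofReal_injective (by simpa using h))
  apply Complex.ofReal_injective
  push_cast [ofReal_hyp2F1, Complex.ofReal_cpow cos_pi_div_twelve_pos.le,
    Complex.ofReal_cpow zero_le_four]
  simpa using hgeneral
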